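/- Let X ⊆ A^ℤ be a subshift that has only finitely many σ±-chain components and that admits a finite factor with nontrivial dynamics: there exist a finite set Y with a map g : Y → Y, g ≠ id_Y, and a continuous surjection π : X → Y with π ∘ σ = g ∘ π. Then X is not the generic limit set of any cellular automaton on A^ℤ. -/

import Mathlib

open Filter Set Function

namespace Gls

variable {A : Type*}

/-- The left shift map on `A^ℤ`. -/
def shift (x : ℤ → A) : ℤ → A := fun i => x (i + 1)

/-- A cellular automaton: a continuous shift-commuting self-map of the full shift. -/
def IsCA [TopologicalSpace A] (f : (ℤ → A) → (ℤ → A)) : Prop :=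
  Continuous f ∧ f ∘ shift = shift ∘ f

/-- The set of limit points of the forward orbit of `x` under `f`. -/
def omegaSet [TopologicalSpace A] (f : (ℤ → A) → (ℤ → A)) (x : ℤ → A) : Set (ℤ → A) :=
  {y | MapClusterPt y atTop fun t => f^[t] x}

/-- The realm of attraction of `Y`. -/
def realm [TopologicalSpace A] (f : (ℤ → A) → (ℤ → A)) (Y : Set (ℤ → A)) : Set (ℤ → A) :=
  {x | omegaSet f x ⊆ Y}

/-- The generic limit set: the intersection of all closed sets whose realm is comeager. -/
def genLimitSet [TopologicalSpace A] (f : (ℤ → A) → (ℤ → A)) : Set (ℤ → A) :=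
  ⋂₀ {C | IsClosed C ∧ realm f C ∈ residual (ℤ → A)}

/-- The word `x_{[i, i+n)}` of length `n` read in the configuration `x` from position `i`. -/
def word (x : ℤ → A) (i : ℤ) (n : ℕ) : List A :=
  (List.range n).map fun k => x (i + k)

/-- The cylinder set `[w]_i`. -/
def cylinder (w : List A) (i : ℤ) : Set (ℤ → A) := {x | word x i w.length = w}

/-- The language of `X`: all finite words occurring in points of `X`. -/
def lang (X : Set (ℤ → A)) : Set (List A) :=
  {w | ∃ x ∈ X, ∃ i : ℤ, word x i w.length = w}


/-- A subshift: a closed shift-invariant set. -/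
def IsSubshift {A : Type*} [TopologicalSpace A] (X : Set (ℤ → A)) : Prop :=
  IsClosed X ∧ shift '' X = X

/-- The chain relation: `u ∼ v` iff they have the same length `n` and there are `x ∈ X`
and `k ≥ 0` with `x_{[0,n)} = u` and `x_{[k,k+n)} = v`. -/
def chainRel {A : Type*} (X : Set (ℤ → A)) (u v : List A) : Prop :=
  u.length = v.length ∧ ∃ x ∈ X, ∃ k : ℕ,
    word x 0 u.length = u ∧ word x (k : ℤ) u.length = v

/-- `X` is `σ±`-chain transitive if for every `n`, the symmetric-transitive closure of the
width-`n` chain relation relates every pair of words in `L_n(X)`. -/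
def ChainTransPM {A : Type*} (X : Set (ℤ → A)) : Prop :=
  ∀ u ∈ lang X, ∀ v ∈ lang X, u.length = v.length → Relation.EqvGen (chainRel X) u v

/-- `Y` is a `σ±`-chain component of `X`: a maximal `σ±`-chain transitive subshift
contained in `X`. -/
def IsChainComponent {A : Type*} [TopologicalSpace A] (X Y : Set (ℤ → A)) : Prop :=
  IsSubshift Y ∧ Y ⊆ X ∧ ChainTransPM Y ∧
    ∀ Z : Set (ℤ → A), IsSubshift Z → Z ⊆ X → ChainTransPM Z → Y ⊆ Z → Z = Y

/-- The restriction of the shift map to a shift-invariant set `X`. -/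
def shiftRes {A : Type*} (X : Set (ℤ → A)) (h : shift '' X = X) : X → X :=
  fun x => ⟨shift x.val, h.subset (Set.mem_image_of_mem shift x.prop)⟩

theorem shift_iter (x : ℤ → A) (k : ℕ) (i : ℤ) : (shift^[k] x) i = x (i + k) := by
  induction k generalizing x with
  | zero => simp
  | succ k ih =>
    rw [Function.iterate_succ_apply, ih]
    simp only [shift]
    congr 1
    push_cast
    ring

theorem shift_continuous [TopologicalSpace A] : Continuous (shift : (ℤ → A) → (ℤ → A)) :=
  continuous_pi fun i => continuous_apply (i + 1)

theorem nhds_agree [TopologicalSpace A] [DiscreteTopology A] (x : ℤ → A) (U : Set (ℤ → A))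
    (hU : IsOpen U) (hx : x ∈ U) : ∃ n : ℕ, ∀ y, (∀ i : ℤ, |i| ≤ n → x i = y i) → y ∈ U := by
  obtain ⟨I, u, h1, h2⟩ := isOpen_pi_iff.1 hU x hx
  refine ⟨I.sup Int.natAbs, fun y hy => h2 ?_⟩
  intro i hi
  rw [← hy i ?_]
  · exact (h1 i hi).2
  · have := Finset.le_sup (f := Int.natAbs) hi
    rw [Int.abs_eq_natAbs]
    exact_mod_cast this

theorem word_eq_iff (x y : ℤ → A) (i j : ℤ) (n : ℕ) :
    word x i n = word y j n ↔ ∀ k : ℕ, k < n → x (i + k) = y (j + k) := by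
  simp [word, List.map_inj_left]
  exact ⟨fun h k hk => h k k hk rfl, fun h a k hk e => e ▸ h k hk⟩

theorem word_length (x : ℤ → A) (i : ℤ) (n : ℕ) : (word x i n).length = n := by
  simp [word]

theorem uniform_lc [Finite A] [TopologicalSpace A] [DiscreteTopology A] {X : Set (ℤ → A)}
    (hX : IsClosed X) {F : Type*} (h : X → F) (hh : IsLocallyConstant h) :
    ∃ n : ℕ, ∀ x x' : X, (∀ i : ℤ, |i| ≤ n → x.1 i = x'.1 i) → h x = h x' := by
  haveI : CompactSpace X := isCompact_iff_compactSpace.1 hX.isCompact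
  have := (isCompact_univ (X := X)).induction_on
    (p := fun S => ∃ n : ℕ, ∀ x ∈ S, ∀ x' : X, (∀ i : ℤ, |i| ≤ n → x.1 i = x'.1 i) → h x = h x')
    ⟨0, by simp⟩
    (by
      rintro s t hst ⟨n, hn⟩
      exact ⟨n, fun x hx => hn x (hst hx)⟩)
    (by
      rintro s t ⟨n, hn⟩ ⟨m, hm⟩
      refine ⟨max n m, ?_⟩
      rintro x (hx | hx) x' hxx'
      · exact hn x hx x' fun i hi => hxx' i (by push_cast; exact le_max_of_le_left hi)
      · exact hm x hx x' fun i hi => hxx' i (by push_cast; exact le_max_of_le_right hi))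
    (by
      intro x _
      obtain ⟨U, hU, hUx⟩ := isOpen_induced_iff.1 (hh.isOpen_fiber (h x))
      have hxU : x.1 ∈ U := by
        have : x ∈ Subtype.val ⁻¹' U := by rw [hUx]; rfl
        exact this
      obtain ⟨n, hn⟩ := nhds_agree x.1 U hU hxU
      have hn' : ∀ y : X, (∀ i : ℤ, |i| ≤ n → x.1 i = y.1 i) → h y = h x := by
        intro y hy
        have : y ∈ Subtype.val ⁻¹' U := hn y.1 hy
        rw [hUx] at this
        exact this
      refine ⟨{y : X | ∀ i ∈ Finset.Icc (-(n : ℤ)) n, x.1 i = y.1 i}, ?_, n, ?_⟩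
      · refine mem_nhdsWithin_of_mem_nhds ?_
        have : ∀ᶠ y : X in nhds x, ∀ i ∈ Finset.Icc (-(n : ℤ)) n, x.1 i = y.1 i := by
          rw [Filter.eventually_all_finset]
          intro i _
          have hc : Continuous fun y : X => y.1 i := (continuous_apply i).comp continuous_subtype_val
          have := hc.continuousAt (x := x) (mem_nhds_discrete.2 (Set.mem_singleton (x.1 i)))
          filter_upwards [this] with y hy
          exact hy.symm
        exact this
      · intro y hy x' hx'
        have hy' : ∀ i : ℤ, |i| ≤ n → x.1 i = y.1 i := fun i hi =>
          hy i (by rw [Finset.mem_Icc]; exact abs_le.1 hi)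
        rw [hn' y hy', hn' x' fun i hi => (hy' i hi).trans (hx' i hi)])
  obtain ⟨n, hn⟩ := this
  exact ⟨n, fun x x' => hn x trivial x'⟩

theorem extend_lc [Finite A] [TopologicalSpace A] [DiscreteTopology A] {X : Set (ℤ → A)}
    (hX : IsClosed X) {F : Type*} [Nonempty F] (h : X → F) (hh : IsLocallyConstant h) :
    ∃ p : (ℤ → A) → F, IsLocallyConstant p ∧ ∀ x : X, p x.1 = h x := by
  obtain ⟨n, hn⟩ := uniform_lc hX h hh
  let r : (ℤ → A) → (Finset.Icc (-(n : ℤ)) n → A) := fun x i => x i.1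
  have hr : Continuous r := continuous_pi fun i => continuous_apply i.1
  have hf : Function.FactorsThrough h (fun x : X => r x.1) := by
    intro x y hxy
    apply hn
    intro i hi
    exact congrFun hxy ⟨i, by rw [Finset.mem_Icc]; exact abs_le.1 hi⟩
  refine ⟨fun x => Function.extend (fun x : X => r x.1) h (fun _ => Classical.arbitrary F) (r x),
    ?_, fun x => hf.extend_apply _ x⟩
  exact (IsLocallyConstant.of_discrete
    (Function.extend (fun x : X => r x.1) h (fun _ => Classical.arbitrary F))).comp_continuous hr

theorem shiftRes_iter {X : Set (ℤ → A)} (h : shift '' X = X) (k : ℕ) (x : X) :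
    ((shiftRes X h)^[k] x).1 = shift^[k] x.1 := by
  induction k generalizing x with
  | zero => rfl
  | succ k ih => rw [Function.iterate_succ_apply, Function.iterate_succ_apply, ih]; rfl

theorem shift_mem_iter {X : Set (ℤ → A)} (h : shift '' X = X) (k : ℕ) {x : ℤ → A} (hx : x ∈ X) :
    shift^[k] x ∈ X := by
  have := shiftRes_iter h k ⟨x, hx⟩
  simp only at this
  rw [← this]
  exact Subtype.prop _

theorem chain_const [Finite A] [TopologicalSpace A] [DiscreteTopology A] {X : Set (ℤ → A)}
    (hX : IsSubshift X) {F : Type*} (h : X → F) (hh : IsLocallyConstant h)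
    (hs : ∀ x, h (shiftRes X hX.2 x) = h x) {Z : Set (ℤ → A)} (hZX : Z ⊆ X)
    (hZs : shift '' Z = Z)
    (hZ : ChainTransPM Z) (z z' : X) (hz : z.1 ∈ Z) (hz' : z'.1 ∈ Z) : h z = h z' := by
  obtain ⟨n, hn⟩ := uniform_lc hX.1 h hh
  have hsk : ∀ (k : ℕ) x, h ((shiftRes X hX.2)^[k] x) = h x := by
    intro k
    induction k with
    | zero => intro x; rfl
    | succ k ih => intro x; rw [Function.iterate_succ_apply, ih, hs]
  have hf : Function.FactorsThrough h (fun x : X => word x.1 0 (2 * n + 1)) := by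
    intro x y hxy
    simp only [word_eq_iff] at hxy
    rw [← hsk n x, ← hsk n y]
    apply hn
    intro i hi
    rw [shiftRes_iter, shiftRes_iter, shift_iter, shift_iter]
    rw [abs_le] at hi
    have := hxy (i + n).toNat (by omega)
    have e : (((i + n).toNat : ℕ) : ℤ) = i + n := Int.toNat_of_nonneg (by omega)
    rw [e] at this
    simpa using this
  let H := Function.extend (fun x : X => word x.1 0 (2 * n + 1)) h (fun _ => h z)
  have hH : ∀ x : X, H (word x.1 0 (2 * n + 1)) = h x := fun x => hf.extend_apply _ x
  have key : ∀ u v, Relation.EqvGen (chainRel Z) u v →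
      u.length = v.length ∧ (u.length = 2 * n + 1 → H u = H v) := by
    intro u v huv
    induction huv with
    | rel u v huv =>
      obtain ⟨hl, x, hx, k, hu, hv⟩ := huv
      refine ⟨hl, fun hlen => ?_⟩
      rw [hlen] at hu hv
      rw [← hu, ← hv]
      have e1 := hH ⟨x, hZX hx⟩
      have e2 := hH ((shiftRes X hX.2)^[k] ⟨x, hZX hx⟩)
      have e3 : word ((shiftRes X hX.2)^[k] ⟨x, hZX hx⟩).1 0 (2 * n + 1)
          = word x (k : ℤ) (2 * n + 1) := by
        rw [word_eq_iff]
        intro j _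
        rw [shiftRes_iter, shift_iter]
        congr 1
        ring
      rw [e3, hsk] at e2
      exact e1.trans e2.symm
    | refl u => exact ⟨rfl, fun _ => rfl⟩
    | symm u v _ ih => exact ⟨ih.1.symm, fun h => (ih.2 (ih.1.trans h)).symm⟩
    | trans u v w _ _ ih1 ih2 =>
      exact ⟨ih1.1.trans ih2.1, fun h => (ih1.2 h).trans (ih2.2 (ih1.1 ▸ h))⟩
  have := key (word z.1 0 (2 * n + 1)) (word z'.1 0 (2 * n + 1))
    (hZ _ ⟨z.1, hz, 0, by rw [word_length]⟩ _ ⟨z'.1, hz', 0, by rw [word_length]⟩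
      (by rw [word_length, word_length]))
  have := this.2 (word_length _ _ _)
  rwa [hH, hH] at this

theorem lang_closure [TopologicalSpace A] [DiscreteTopology A] (S : Set (ℤ → A)) (w : List A)
    (hw : w ∈ lang (closure S)) : w ∈ lang S := by
  obtain ⟨x, hx, i, hi⟩ := hw
  have ho : IsOpen {y : ℤ → A | word y i w.length = w} := by
    have hc : Continuous fun (y : ℤ → A) (k : Fin w.length) => y (i + k) :=
      continuous_pi fun k => continuous_apply _
    have : {y : ℤ → A | word y i w.length = w} =
        (fun (y : ℤ → A) (k : Fin w.length) => y (i + k)) ⁻¹'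
          {fun k : Fin w.length => x (i + k)} := by
      ext y
      simp only [Set.mem_setOf_eq, Set.mem_preimage, Set.mem_singleton_iff]
      constructor
      · intro hy
        rw [← hi, word_length, word_eq_iff] at hy
        funext k
        exact hy k (by simp)
      · intro hy
        rw [← hi, word_length, word_eq_iff]
        intro k hk
        exact congrFun hy ⟨k, hk⟩
    rw [this]
    exact (isOpen_discrete _).preimage hc
  obtain ⟨y, hy, hyS⟩ := mem_closure_iff.1 hx _ ho hi
  exact ⟨y, hyS, i, hy⟩

theorem chainRel_mono {S T : Set (ℤ → A)} (h : S ⊆ T) {u v : List A} (huv : chainRel S u v) :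
    chainRel T u v := by
  obtain ⟨hl, x, hx, r⟩ := huv
  exact ⟨hl, x, h hx, r⟩

def shiftHomeo [TopologicalSpace A] : (ℤ → A) ≃ₜ (ℤ → A) where
  toFun := shift
  invFun := fun x i => x (i - 1)
  left_inv := fun x => by funext i; simp [shift]
  right_inv := fun x => by funext i; simp [shift]
  continuous_toFun := shift_continuous
  continuous_invFun := continuous_pi fun i => continuous_apply (i - 1)

theorem subshift_closure [TopologicalSpace A] {S : Set (ℤ → A)} (h : shift '' S = S) :
    IsSubshift (closure S) := by
  refine ⟨isClosed_closure, ?_⟩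
  have := (shiftHomeo (A := A)).image_closure S
  have e : (shiftHomeo (A := A) : (ℤ → A) → (ℤ → A)) = shift := rfl
  rw [e, h] at this
  exact this

theorem exists_component [TopologicalSpace A] [DiscreteTopology A] {X : Set (ℤ → A)}
    (hX : IsSubshift X) {x : ℤ → A} (hx : x ∈ X) : ∃ Z, IsChainComponent X Z ∧ x ∈ Z := by
  let O : Set (ℤ → A) := Set.range fun k : ℤ => fun i => x (i + k)
  have hO : shift '' O = O := by
    ext y
    constructor
    · rintro ⟨_, ⟨k, rfl⟩, rfl⟩
      refine ⟨k + 1, ?_⟩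
      funext i
      simp only [shift]
      congr 1
      ring
    · rintro ⟨k, rfl⟩
      refine ⟨_, ⟨k - 1, rfl⟩, ?_⟩
      funext i
      simp only [shift]
      congr 1
      ring
  have hxO : x ∈ O := ⟨0, by simp⟩
  have hback : ∀ y, shift y ∈ X → y ∈ X := by
    intro y hy
    rw [← hX.2] at hy
    obtain ⟨z, hz, hzy⟩ := hy
    have : z = y := (shiftHomeo (A := A)).injective hzy
    exact this ▸ hz
  have hOX : O ⊆ X := by
    rintro _ ⟨k, rfl⟩
    simp only
    obtain ⟨n, rfl | rfl⟩ := k.eq_nat_or_neg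
    · have := shift_mem_iter hX.2 n hx
      have e : shift^[n] x = fun i => x (i + n) := funext fun i => shift_iter x n i
      rwa [e] at this
    · induction n with
      | zero => simpa using hx
      | succ n ih =>
        apply hback
        convert ih using 1
        funext i
        simp only [shift]
        congr 1
        push_cast
        ring
  have hOc : ChainTransPM (closure O) := by
    have hmem : ∀ u ∈ lang (closure O), ∃ i : ℤ, word x i u.length = u := by
      intro u hu
      obtain ⟨_, ⟨k, rfl⟩, i, hi⟩ := lang_closure _ _ hu
      refine ⟨i + k, ?_⟩
      rw [← hi, word_length, word_eq_iff]
      intro j _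
      simp only
      congr 1
      ring
    have main : ∀ u v : List A, u.length = v.length → ∀ i j : ℤ, i ≤ j →
        word x i u.length = u → word x j v.length = v → chainRel (closure O) u v := by
      intro u v hl i j hij hu hv
      refine ⟨hl, _, subset_closure ⟨i, rfl⟩, (j - i).toNat, ?_, ?_⟩
      · conv_rhs => rw [← hu]
        rw [word_eq_iff]
        intro k _
        simp only
        congr 1
        ring
      · conv_rhs => rw [← hv]
        rw [hl, word_eq_iff]
        intro k _
        simp only
        congr 1
        rw [Int.toNat_of_nonneg (by omega)]
        ring
    intro u hu v hv hl
    obtain ⟨i, hi⟩ := hmem u hu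
    obtain ⟨j, hj⟩ := hmem v hv
    rcases le_total i j with hij | hij
    · exact Relation.EqvGen.rel _ _ (main u v hl i j hij hi hj)
    · exact Relation.EqvGen.symm _ _ (Relation.EqvGen.rel _ _ (main v u hl.symm j i hij hj hi))
  obtain ⟨Z, hOZ, hZ⟩ := zorn_subset_nonempty
    {Z : Set (ℤ → A) | IsSubshift Z ∧ Z ⊆ X ∧ ChainTransPM Z}
    (by
      intro c hc hch hne
      have hs : shift '' (⋃₀ c) = ⋃₀ c := by
        rw [Set.sUnion_eq_biUnion, Set.image_iUnion₂]
        exact Set.iUnion₂_congr fun Z hZ => (hc hZ).1.2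
      refine ⟨closure (⋃₀ c), ⟨subshift_closure hs,
        closure_minimal (Set.sUnion_subset fun Z hZ => (hc hZ).2.1) hX.1, ?_⟩,
        fun s hs => (Set.subset_sUnion_of_mem hs).trans subset_closure⟩
      intro u hu v hv hl
      obtain ⟨y, ⟨Z, hZ, hyZ⟩, i, hi⟩ := lang_closure _ _ hu
      obtain ⟨y', ⟨Z', hZ', hyZ'⟩, i', hi'⟩ := lang_closure _ _ hv
      have : ∃ W ∈ c, y ∈ W ∧ y' ∈ W := by
        rcases hch.total hZ hZ' with h | h
        · exact ⟨Z', hZ', h hyZ, hyZ'⟩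
        · exact ⟨Z, hZ, hyZ, h hyZ'⟩
      obtain ⟨W, hW, hy, hy'⟩ := this
      exact ((hc hW).2.2 u ⟨y, hy, i, hi⟩ v ⟨y', hy', i', hi'⟩ hl).mono
        fun a b hab => chainRel_mono ((Set.subset_sUnion_of_mem hW).trans subset_closure) hab)
    (closure O) ⟨subshift_closure hO, closure_minimal hOX hX.1, hOc⟩
  refine ⟨Z, ⟨hZ.prop.1, hZ.prop.2.1, hZ.prop.2.2, ?_⟩, hOZ (subset_closure hxO)⟩
  intro Z' h1 h2 h3 h4
  exact (hZ.eq_of_subset ⟨h1, h2, h3⟩ h4).symm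

theorem eventually_of_realm [Finite A] [TopologicalSpace A] [DiscreteTopology A]
    {f : (ℤ → A) → (ℤ → A)} {X W : Set (ℤ → A)} (hW : IsOpen W) (hXW : X ⊆ W) {x : ℤ → A}
    (hx : x ∈ realm f X) : ∀ᶠ t in atTop, f^[t] x ∈ W := by
  by_contra hcon
  have hfr : ∃ᶠ t in atTop, f^[t] x ∈ Wᶜ := Filter.not_eventually.1 hcon
  obtain ⟨y, hy, hyc⟩ := (hW.isClosed_compl.isCompact).exists_mapClusterPt_of_frequently hfr
  exact hy (hXW (hx hyc))

theorem realm_gen [Finite A] [TopologicalSpace A] [DiscreteTopology A]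
    (f : (ℤ → A) → (ℤ → A)) : realm f (genLimitSet f) ∈ residual (ℤ → A) := by
  obtain ⟨T, hTc, hT, hTe⟩ := TopologicalSpace.isOpen_sUnion_countable
    (compl '' {C | IsClosed C ∧ realm f C ∈ residual (ℤ → A)})
    (by rintro _ ⟨C, hC, rfl⟩; exact hC.1.isOpen_compl)
  have : (⋂ S ∈ T, realm f Sᶜ) ∈ residual (ℤ → A) := by
    rw [countable_bInter_mem hTc]
    intro S hS
    obtain ⟨C, hC, rfl⟩ := hT hS
    rw [compl_compl]
    exact hC.2
  filter_upwards [this] with x hx y hy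
  rw [genLimitSet, ← compl_compl (⋂₀ _), Set.compl_sInter, ← hTe]
  rintro ⟨S, hS, hyS⟩
  exact (Set.mem_iInter₂.1 hx S hS) hy hyS

theorem gen_invariant [TopologicalSpace A]
    {f : (ℤ → A) → (ℤ → A)} (hf : Continuous f) {x : ℤ → A} (hx : x ∈ genLimitSet f) :
    f x ∈ genLimitSet f := by
  intro C hC
  refine hx (f ⁻¹' C) ⟨hC.1.preimage hf, ?_⟩
  filter_upwards [hC.2] with z hz y hy
  apply hz
  have h1 : MapClusterPt (f y) atTop (f ∘ fun t => f^[t] z) :=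
    MapClusterPt.continuousAt_comp hf.continuousAt hy
  have h2 : (f ∘ fun t => f^[t] z) = (fun t => f^[t] z) ∘ (fun t => t + 1) := by
    funext t
    simp [Function.iterate_succ_apply']
  rw [h2] at h1
  exact h1.of_comp (tendsto_add_atTop_nat 1)

theorem realm_shift [TopologicalSpace A]
    {f : (ℤ → A) → (ℤ → A)} (hf : IsCA f) {X : Set (ℤ → A)} (hX : shift '' X = X) {x : ℤ → A}
    (hx : x ∈ realm f X) : shift x ∈ realm f X := by
  intro y hy
  have hcom : Function.Commute f shift := fun z => congrFun hf.2 z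
  let s := shiftHomeo (A := A)
  have h1 : MapClusterPt (s.symm y) atTop (s.symm ∘ fun t => f^[t] (shift x)) :=
    MapClusterPt.continuousAt_comp s.symm.continuous.continuousAt hy
  have h2 : (s.symm ∘ fun t => f^[t] (shift x)) = fun t => f^[t] x := by
    funext t
    have : f^[t] (shift x) = s (f^[t] x) := (hcom.iterate_left t) x
    simp [this]
  rw [h2] at h1
  have h3 := hx h1
  rw [← hX]
  exact ⟨_, h3, s.apply_symm_apply y⟩

theorem mixing [TopologicalSpace A] [DiscreteTopology A] {V : Set (ℤ → A)} (hV : IsOpen V)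
    {z : ℤ → A} (hz : z ∈ V) : ∃ K : ℕ, ∀ k ≥ K, ∃ x ∈ V, shift^[k] x ∈ V := by
  obtain ⟨n, hn⟩ := nhds_agree z V hV hz
  refine ⟨2 * n + 1, fun k hk => ⟨fun i => if i ≤ n then z i else z (i - k), ?_, ?_⟩⟩
  · apply hn
    intro i hi
    rw [abs_le] at hi
    simp [hi.2]
  · apply hn
    intro i hi
    rw [abs_le] at hi
    rw [shift_iter, if_neg (by omega)]
    simp

theorem core [Finite A] [TopologicalSpace A] [DiscreteTopology A]
    {f : (ℤ → A) → (ℤ → A)} (hf : IsCA f) {X : Set (ℤ → A)} (hX : shift '' X = X)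
    (hgen : genLimitSet f = X) {F : Type*} (p : (ℤ → A) → F) (hp : IsLocallyConstant p)
    (g φ : F → F) (hpg : ∀ x ∈ X, p (shift x) = g (p x)) (hpf : ∀ x ∈ X, p (f x) = φ (p x)) :
    ∀ x ∈ X, g (p x) = p x := by
  have hres : realm f X ∈ residual (ℤ → A) := hgen ▸ realm_gen f
  have hdense : Dense (realm f X) := dense_of_mem_residual hres
  have hcom : Function.Commute f shift := fun z => congrFun hf.2 z
  have hpf' : IsLocallyConstant (fun x => p (f x)) := hp.comp_continuous hf.1
  have hps' : IsLocallyConstant (fun x => p (shift x)) := hp.comp_continuous shift_continuous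
  let W : Set (ℤ → A) := {x | p (f x) = φ (p x)}
  let W' : Set (ℤ → A) := {x | p (shift x) = g (p x)}
  have hWc : IsClopen W := by
    have h : IsLocallyConstant fun x => (p (f x), p x) := hpf'.prodMk hp
    exact ⟨⟨h {q | ¬ q.1 = φ q.2}⟩, h {q | q.1 = φ q.2}⟩
  have hWo' : IsOpen W' := by
    have h : IsLocallyConstant fun x => (p (shift x), p x) := hps'.prodMk hp
    exact h {q | q.1 = g q.2}
  let E : ℕ → Set (ℤ → A) := fun T => {x | ∀ t ≥ T, f^[t] x ∈ W}
  have hE : ∀ T, IsClosed (E T) := by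
    intro T
    have : E T = ⋂ t ≥ T, f^[t] ⁻¹' W := by ext x; simp [E]
    rw [this]
    exact isClosed_biInter fun t _ => hWc.1.preimage (hf.1.iterate t)
  have hEint : (⋃ T, interior (E T)) ∈ residual (ℤ → A) := by
    obtain ⟨s, hs, hsG, hsd⟩ := mem_residual.1 hres
    refine residual_of_dense_open (isOpen_iUnion fun _ => isOpen_interior)
      (hsG.dense_iUnion_interior_of_closed hsd hE ?_)
    intro x hx
    obtain ⟨T, hT⟩ := eventually_atTop.1 (eventually_of_realm hWc.2 hpf (hs hx))
    exact Set.mem_iUnion.2 ⟨T, hT⟩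
  have hshift : ∀ x ∈ realm f X, ∀ k : ℕ,
      ∀ᶠ t in atTop, p (f^[t] (shift^[k] x)) = g^[k] (p (f^[t] x)) := by
    intro x hx k
    have hk : ∀ k, shift^[k] x ∈ realm f X := by
      intro k
      induction k with
      | zero => exact hx
      | succ k ih => rw [Function.iterate_succ_apply']; exact realm_shift hf hX ih
    induction k with
    | zero => exact Filter.Eventually.of_forall fun _ => rfl
    | succ k ih =>
      filter_upwards [ih, eventually_of_realm hWo' hpg (hk k)] with t h1 h2
      rw [Function.iterate_succ_apply', Function.iterate_succ_apply', ← h1, ← h2]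
      congr 1
      exact (hcom.iterate_left t) _
  have hC : IsClosed {x | g (p x) = p x} :=
    ⟨hp {q | ¬ g q = q}⟩
  have hsub : X ⊆ {x | g (p x) = p x} := by
    rw [← hgen]
    refine Set.sInter_subset_of_mem ⟨hC, ?_⟩
    filter_upwards [hEint] with z hz
    obtain ⟨T, hzT⟩ := Set.mem_iUnion.1 hz
    let V : Set (ℤ → A) := interior (E T) ∩ {x | p (f^[T] x) = p (f^[T] z)}
    have hVo : IsOpen V :=
      isOpen_interior.inter ((hp.comp_continuous (hf.1.iterate T)).isOpen_fiber _)
    have hzV : z ∈ V := ⟨hzT, rfl⟩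
    have hconst : ∀ x ∈ V, ∀ t ≥ T, p (f^[t] x) = p (f^[t] z) := by
      intro x hx t ht
      induction t, ht using Nat.le_induction with
      | base => exact hx.2
      | succ t ht ih =>
        rw [Function.iterate_succ_apply', Function.iterate_succ_apply']
        have h1 : p (f (f^[t] x)) = _ := interior_subset hx.1 t ht
        have h2 : p (f (f^[t] z)) = _ := interior_subset hzT t ht
        rw [h1, h2, ih]
    obtain ⟨K, hK⟩ := mixing hVo hzV
    have hper : ∀ k ≥ K, ∀ᶠ t in atTop, g^[k] (p (f^[t] z)) = p (f^[t] z) := by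
      intro k hk
      obtain ⟨x, hx⟩ := hK k hk
      obtain ⟨y, hy, hyr⟩ := hdense.inter_open_nonempty (V ∩ shift^[k] ⁻¹' V)
        (hVo.inter (hVo.preimage (shift_continuous.iterate k))) ⟨x, hx⟩
      filter_upwards [hshift y hyr k, eventually_ge_atTop T] with t h1 h2
      rw [hconst y hy.1 t h2, hconst _ hy.2 t h2] at h1
      exact h1.symm
    have hev : ∀ᶠ t in atTop, f^[t] z ∈ {x | g (p x) = p x} := by
      filter_upwards [hper K le_rfl, hper (K + 1) (Nat.le_succ K)] with t h1 h2
      rw [Function.iterate_succ_apply', h1] at h2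
      exact h2
    intro y hy
    by_contra hyn
    have := (hy.frequently (hC.isOpen_compl.mem_nhds hyn))
    exact this (hev.mono fun t ht hn => hn ht)
  exact hsub

theorem stmt18 [Fintype A] [Nonempty A] [TopologicalSpace A] [DiscreteTopology A]
    (X : Set (ℤ → A)) (hX : IsSubshift X)
    (hfin : {Y : Set (ℤ → A) | IsChainComponent X Y}.Finite)
    (hfactor : ∃ (Y : Type) (_ : Fintype Y) (g : Y → Y) (π : X → Y),
      g ≠ id ∧ (@Continuous _ _ _ ⊥ π) ∧ Function.Surjective π ∧
        ∀ x : X, π (shiftRes X hX.2 x) = g (π x)) :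
    ∀ f : (ℤ → A) → (ℤ → A), IsCA f → genLimitSet f ≠ X := by
  intro f hf hgen
  obtain ⟨Y, _, g, π, hg, hπc, hπs, hπ⟩ := hfactor
  letI : TopologicalSpace Y := ⊥
  haveI : DiscreteTopology Y := ⟨rfl⟩
  have hgs : Function.Surjective g := by
    intro y
    obtain ⟨⟨x, hx⟩, rfl⟩ := hπs y
    have hx' := hx
    rw [← hX.2] at hx'
    obtain ⟨w, hw, rfl⟩ := hx'
    exact ⟨π ⟨w, hw⟩, (hπ ⟨w, hw⟩).symm⟩
  let e : Equiv.Perm Y := Equiv.ofBijective g (Finite.surjective_iff_bijective.1 hgs)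
  have he : ∀ y, e y = g y := fun y => rfl
  have hfX : ∀ x ∈ X, f x ∈ X := by
    rw [← hgen]
    exact fun x hx => gen_invariant hf.1 hx
  let fX : X → X := fun x => ⟨f x.1, hfX x.1 x.2⟩
  have hfXc : Continuous fX := (hf.1.comp continuous_subtype_val).subtype_mk _
  have hcom : Function.Commute fX (shiftRes X hX.2) := fun x =>
    Subtype.ext (congrFun hf.2 x.1)
  let s : X → ℕ → Y := fun x t => π (fX^[t] x)
  have hsc : Continuous s := continuous_pi fun t => hπc.comp (hfXc.iterate t)
  have hsg : ∀ x t, s (shiftRes X hX.2 x) t = g (s x t) := by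
    intro x t
    simp only [s]
    rw [← hπ]
    congr 1
    exact (hcom.iterate_left t) x
  have hsf : ∀ x, s (fX x) = fun t => s x (t + 1) := fun x => rfl
  have hcomp : ∀ Z, IsChainComponent X Z → ∀ z₀ z : X, z₀.1 ∈ Z → z.1 ∈ Z →
      ∃ γ : Equiv.Perm Y, s z = fun t => γ (s z₀ t) := by
    intro Z hZ z₀ z hz₀ hz
    by_contra! hcon
    have hcon' : ∀ γ : Equiv.Perm Y, ∃ t, s z t ≠ γ (s z₀ t) := fun γ =>
      Function.ne_iff.1 (hcon γ)
    choose τ hτ using hcon'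
    let q : X → (Equiv.Perm Y → Y) := fun x η => s x (τ η)
    have hq : IsLocallyConstant q := by
      rw [IsLocallyConstant.iff_continuous]
      exact continuous_pi fun η => (continuous_apply (τ η)).comp hsc
    let H : X → Set (Equiv.Perm Y → Y) := fun x => Set.range fun γ : Equiv.Perm Y => γ ∘ q x
    have hH : IsLocallyConstant H := hq.comp fun c => Set.range fun γ : Equiv.Perm Y => γ ∘ c
    have hHs : ∀ x, H (shiftRes X hX.2 x) = H x := by
      intro x
      have hqx : q (shiftRes X hX.2 x) = e ∘ q x := funext fun η => hsg x _
      ext c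
      simp only [H, hqx]
      constructor
      · rintro ⟨γ, rfl⟩
        exact ⟨γ * e, rfl⟩
      · rintro ⟨γ, rfl⟩
        refine ⟨γ * e⁻¹, ?_⟩
        funext η
        simp
    have hc := chain_const hX H hH hHs hZ.2.1 hZ.1.2 hZ.2.2.1 z z₀ hz hz₀
    have hm : q z ∈ H z := ⟨1, rfl⟩
    rw [hc] at hm
    obtain ⟨γ, hγ⟩ := hm
    exact hτ γ (congrFun hγ γ).symm
  have hrange : (Set.range s).Finite := by
    have hsub : Set.range s ⊆ ⋃ Z ∈ {Z : Set (ℤ → A) | IsChainComponent X Z},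
        s '' {z : X | z.1 ∈ Z} := by
      rintro _ ⟨x, rfl⟩
      obtain ⟨Z, hZ, hxZ⟩ := exists_component hX x.2
      exact Set.mem_iUnion₂.2 ⟨Z, hZ, x, hxZ, rfl⟩
    refine (hfin.biUnion fun Z hZ => ?_).subset hsub
    by_cases hne : ∃ z₀ : X, z₀.1 ∈ Z
    · obtain ⟨z₀, hz₀⟩ := hne
      refine (Set.finite_range fun γ : Equiv.Perm Y => fun t => γ (s z₀ t)).subset ?_
      rintro _ ⟨z, hz, rfl⟩
      obtain ⟨γ, hγ⟩ := hcomp Z hZ z₀ z hz₀ hz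
      exact ⟨γ, hγ.symm⟩
    · convert Set.finite_empty
      rw [Set.image_eq_empty]
      ext z
      simp only [Set.mem_setOf_eq, Set.mem_empty_iff_false, iff_false]
      exact fun hz => hne ⟨z, hz⟩
  have hslc : IsLocallyConstant s := by
    intro S
    have : s ⁻¹' S = (s ⁻¹' (Set.range s \ S))ᶜ := by ext x; simp
    rw [this]
    exact (((hrange.subset Set.diff_subset).isClosed).preimage hsc).isOpen_compl
  obtain ⟨y₀, hy₀⟩ := Function.ne_iff.1 hg
  obtain ⟨x₀, rfl⟩ := hπs y₀
  haveI : Nonempty (ℕ → Y) := ⟨s x₀⟩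
  obtain ⟨p, hp, hps⟩ := extend_lc hX.1 s hslc
  have := core hf hX.2 hgen p hp (fun c t => g (c t)) (fun c t => c (t + 1))
    (fun x hx => by
      have h1 := hps (shiftRes X hX.2 ⟨x, hx⟩)
      have h2 := hps ⟨x, hx⟩
      have h3 : s (shiftRes X hX.2 ⟨x, hx⟩) = fun t => g (s ⟨x, hx⟩ t) := funext fun t => hsg _ t
      rw [h3, ← h2] at h1
      exact h1)
    (fun x hx => by
      have h1 := hps (fX ⟨x, hx⟩)
      have h2 := hps ⟨x, hx⟩
      rw [hsf, ← h2] at h1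
      exact h1) x₀.1 x₀.2
  rw [hps] at this
  exact hy₀ (congrFun this 0)

end Gls
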